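/- arXiv:1603.02310 — 2 statements merged into one kernel-verified Lean document; each statement's English description precedes it below -/
import Mathlib

section
/- Let H be a 3-connected almost-planar graph and let G be obtained from H by repeatedly subdividing edges, where every subdivided edge belongs to D(H). Then G is almost-planar, and so is any graph obtained from G by adding isolated vertices. -/
open SimpleGraph

/-- `H` is a minor of `G` (branch-set / model definition). -/
def IsMinor {W V : Type*} (H : SimpleGraph W) (G : SimpleGraph V) : Prop :=
  ∃ B : W → Set V,
    (∀ w, (B w).Nonempty) ∧
    (∀ w, (G.induce (B w)).Connected) ∧
    (Pairwise fun w₁ w₂ => Disjoint (B w₁) (B w₂)) ∧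
    (∀ ⦃w₁ w₂ : W⦄, H.Adj w₁ w₂ → ∃ v₁ ∈ B w₁, ∃ v₂ ∈ B w₂, G.Adj v₁ v₂)

def K5 : SimpleGraph (Fin 5) := ⊤

def K33 : SimpleGraph (Fin 3 ⊕ Fin 3) := completeBipartiteGraph (Fin 3) (Fin 3)

/-- A graph is planar iff it has neither a `K₅` nor a `K₃,₃` minor (Wagner's theorem). -/
def Planar {V : Type*} (G : SimpleGraph V) : Prop := ¬ IsMinor K5 G ∧ ¬ IsMinor K33 G

/-- `G / uw`: contract the edge `uw`, merging `w` into `u` (the vertex `w` becomes isolated). -/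
def contractEdge {V : Type*} (G : SimpleGraph V) (u w : V) : SimpleGraph V :=
  SimpleGraph.fromRel fun a b =>
    a ≠ w ∧ b ≠ w ∧ (G.Adj a b ∨ (a = u ∧ G.Adj w b) ∨ (b = u ∧ G.Adj a w))

/-- A nonplanar graph is almost-planar if for every edge, deletion or contraction is planar. -/
def AlmostPlanar {V : Type*} (G : SimpleGraph V) : Prop :=
  ¬ Planar G ∧ ∀ ⦃u v : V⦄, G.Adj u v →
    (Planar (G.deleteEdges {s(u, v)}) ∨ Planar (contractEdge G u v))

/-- `G` is `k`-connected: more than `k` vertices and deleting fewer than `k` vertices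
leaves a connected graph. -/
def KConnected {V : Type*} (G : SimpleGraph V) (k : ℕ) : Prop :=
  k < Nat.card V ∧ ∀ s : Set V, s.ncard < k → (G.induce (sᶜ)).Connected

/-- `{G[A], G[B]}` is a `k`-separation of `G`. -/
def IsSep {V : Type*} (G : SimpleGraph V) (k : ℕ) (A B : Set V) : Prop :=
  A ∪ B = Set.univ ∧ A ≠ Set.univ ∧ B ≠ Set.univ ∧ (A ∩ B).ncard = k ∧
  ∀ ⦃x y : V⦄, G.Adj x y → (x ∈ A ∧ y ∈ A) ∨ (x ∈ B ∧ y ∈ B)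

/-- The star `K_{1,3}`, with centre `0`. -/
def K13 : SimpleGraph (Fin 4) := SimpleGraph.fromRel fun a _ => a = 0

def InternallyFourConnected {V : Type*} (G : SimpleGraph V) : Prop :=
  KConnected G 3 ∧ 5 ≤ Nat.card V ∧
  ∀ A B : Set V, IsSep G 3 A B →
    Xor' (Nonempty (G.induce A ≃g K13)) (Nonempty (G.induce B ≃g K13))

/-- The wheel `W_n`: a cycle of length `n` plus a hub (`none`) joined to all of it. -/
def wheelGraph (n : ℕ) : SimpleGraph (Option (Fin n)) :=
  SimpleGraph.fromRel fun a b =>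
    match a, b with
    | some i, some j => j.val = (i.val + 1) % n
    | none, some _ => True
    | _, _ => False

def IsWheel {V : Type*} (G : SimpleGraph V) : Prop :=
  ∃ n, 3 ≤ n ∧ Nonempty (G ≃g wheelGraph n)

/-- The double wheel `DW_n`: a cycle of length `n` plus two adjacent hubs joined to all of it. -/
def doubleWheel (n : ℕ) : SimpleGraph (Fin n ⊕ Fin 2) :=
  SimpleGraph.fromRel fun a b =>
    match a, b with
    | .inl i, .inl j => j.val = (i.val + 1) % n
    | .inl _, .inr _ => True
    | .inr _, .inr _ => True
    | _, _ => False

/-- The Möbius ladder `M_n`: a cycle of length `2n` plus all "opposite" chords. -/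
def mobiusLadder (n : ℕ) : SimpleGraph (Fin (2 * n)) :=
  SimpleGraph.fromRel fun i j =>
    j.val = (i.val + 1) % (2 * n) ∨ j.val = (i.val + n) % (2 * n)

/-- `C²_m`: a cycle of length `m` plus all chords between vertices at distance two. -/
def squareCycle (m : ℕ) : SimpleGraph (Fin m) :=
  SimpleGraph.fromRel fun i j =>
    j.val = (i.val + 1) % m ∨ j.val = (i.val + 2) % m

/-- The alternating double wheel `AW_{2n}`: a cycle of length `2n` plus two adjacent hubs,
each joined to alternating cycle vertices. -/
def altDoubleWheel (n : ℕ) : SimpleGraph (Fin (2 * n) ⊕ Fin 2) :=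
  SimpleGraph.fromRel fun a b =>
    match a, b with
    | .inl i, .inl j => j.val = (i.val + 1) % (2 * n)
    | .inl i, .inr k => i.val % 2 = k.val
    | .inr _, .inr _ => True
    | _, _ => False

/-- The class `𝒲`: three wheels glued along a common triangle `V₀`, with no other edges. -/
def InClassW {V : Type*} (G : SimpleGraph V) : Prop :=
  ∃ P : V → Fin 4,
    (P ⁻¹' {0}).ncard = 3 ∧
    (∀ x y : V, P x = 0 → P y = 0 → x ≠ y → G.Adj x y) ∧
    (∀ i : Fin 4, i ≠ 0 → IsWheel (G.induce {v | P v = 0 ∨ P v = i})) ∧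
    (∀ ⦃x y : V⦄, G.Adj x y → ∃ i : Fin 4, i ≠ 0 ∧ (P x = 0 ∨ P x = i) ∧ (P y = 0 ∨ P y = i))

/-- `EX₁`: `K₃,₃` plus a vertex joined to all of one colour class. -/
def EX1 : SimpleGraph (Option (Fin 3 ⊕ Fin 3)) :=
  SimpleGraph.fromRel fun a b =>
    match a, b with
    | some (.inl _), some (.inr _) => True
    | none, some (.inl _) => True
    | _, _ => False

/-- `EX₂`: `K₅` plus a vertex joined to three of its vertices. -/
def EX2 : SimpleGraph (Option (Fin 5)) :=
  SimpleGraph.fromRel fun a b =>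
    match a, b with
    | some i, some j => i ≠ j
    | none, some j => j.val < 3
    | _, _ => False

/-- `EX₈`: `K₃,₃` plus a vertex joined to two vertices of one class and one of the other. -/
def EX8 : SimpleGraph (Option (Fin 3 ⊕ Fin 3)) :=
  SimpleGraph.fromRel fun a b =>
    match a, b with
    | some (.inl _), some (.inr _) => True
    | none, some x => x = Sum.inl 0 ∨ x = Sum.inl 1 ∨ x = Sum.inr 0
    | _, _ => False

/-- `K₅ʰ`: subdivide the edges `01` and `02` of `K₅` and join the two subdivision vertices. -/
def K5h : SimpleGraph (Fin 5 ⊕ Fin 2) :=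
  SimpleGraph.fromRel fun a b =>
    match a, b with
    | .inl i, .inl j =>
        i ≠ j ∧ ¬(i = 0 ∧ j = 1) ∧ ¬(i = 1 ∧ j = 0) ∧ ¬(i = 0 ∧ j = 2) ∧ ¬(i = 2 ∧ j = 0)
    | .inl i, .inr k => (k = 0 ∧ (i = 0 ∨ i = 1)) ∨ (k = 1 ∧ (i = 0 ∨ i = 2))
    | .inr _, .inr _ => True
    | _, _ => False

/-- `K₃,₃ʰ`: subdivide two edges of `K₃,₃` at a common endpoint and join
the two subdivision vertices. -/
def K33h : SimpleGraph ((Fin 3 ⊕ Fin 3) ⊕ Fin 2) :=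
  SimpleGraph.fromRel fun a b =>
    match a, b with
    | .inl (.inl i), .inl (.inr j) => ¬(i = 0 ∧ (j = 0 ∨ j = 1))
    | .inl (.inr j), .inl (.inl i) => ¬(i = 0 ∧ (j = 0 ∨ j = 1))
    | .inl x, .inr k =>
        (k = 0 ∧ (x = Sum.inl 0 ∨ x = Sum.inr 0)) ∨ (k = 1 ∧ (x = Sum.inl 0 ∨ x = Sum.inr 1))
    | .inr _, .inr _ => True
    | _, _ => False

/-- `K₅⁺`: `K₅` plus a pendant vertex. -/
def K5plus : SimpleGraph (Option (Fin 5)) :=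
  SimpleGraph.fromRel fun a b =>
    match a, b with
    | some i, some j => i ≠ j
    | none, some j => j = 0
    | _, _ => False

/-- `K₃,₃⁺`: `K₃,₃` plus a pendant vertex. -/
def K33plus : SimpleGraph (Option (Fin 3 ⊕ Fin 3)) :=
  SimpleGraph.fromRel fun a b =>
    match a, b with
    | some (.inl _), some (.inr _) => True
    | none, some x => x = Sum.inl 0
    | _, _ => False

/-- `K₅ ⊕ e`: disjoint union of `K₅` and one edge. -/
def K5oplus : SimpleGraph (Fin 5 ⊕ Fin 2) :=
  SimpleGraph.fromRel fun a b =>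
    match a, b with
    | .inl i, .inl j => i ≠ j
    | .inr _, .inr _ => True
    | _, _ => False

/-- `K₃,₃ ⊕ e`: disjoint union of `K₃,₃` and one edge. -/
def K33oplus : SimpleGraph ((Fin 3 ⊕ Fin 3) ⊕ Fin 2) :=
  SimpleGraph.fromRel fun a b =>
    match a, b with
    | .inl (.inl _), .inl (.inr _) => True
    | .inr _, .inr _ => True
    | _, _ => False

/-- The triad addition of `H` at `x y z`: add a new vertex joined to `x`, `y`, `z`. -/
def triadAddition {U : Type*} (H : SimpleGraph U) (x y z : U) : SimpleGraph (Option U) :=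
  SimpleGraph.fromRel fun a b =>
    match a, b with
    | some u, some v => H.Adj u v
    | none, some u => u = x ∨ u = y ∨ u = z
    | _, _ => False

def IsTriadAdditionOf {V U : Type*} (G : SimpleGraph V) (H : SimpleGraph U) : Prop :=
  ∃ x y z : U, x ≠ y ∧ y ≠ z ∧ x ≠ z ∧ Nonempty (G ≃g triadAddition H x y z)

/-- `G` is obtained from `H` by subdividing (possibly repeatedly) edges of `H`,
all of which lie in `S`. -/
def IsSubdivisionWithin {V W : Type*} (G : SimpleGraph V) (H : SimpleGraph W)
    (S : Set (Sym2 W)) : Prop :=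
  ∃ (f : W ↪ V) (p : ∀ ⦃u v : W⦄, H.Adj u v → G.Walk (f u) (f v)),
    (∀ ⦃u v : W⦄ (h : H.Adj u v), (p h).IsPath) ∧
    (∀ ⦃u v : W⦄ (h : H.Adj u v), p h.symm = (p h).reverse) ∧
    (∀ ⦃u v : W⦄ (h : H.Adj u v), s(u, v) ∉ S → (p h).length = 1) ∧
    (∀ ⦃u v : W⦄ (h : H.Adj u v) (w : W), f w ∈ (p h).support → w = u ∨ w = v) ∧
    (∀ ⦃u v u' v' : W⦄ (h : H.Adj u v) (h' : H.Adj u' v'), s(u, v) ≠ s(u', v') →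
      ∀ x : V, x ∈ (p h).support → x ∈ (p h').support → x ∈ Set.range f) ∧
    (∀ x : V, x ∈ Set.range f ∨ ∃ (u v : W) (h : H.Adj u v), x ∈ (p h).support) ∧
    (∀ e ∈ G.edgeSet, ∃ (u v : W) (h : H.Adj u v), e ∈ (p h).edges)

/-- `G` is a subdivision of `H`. -/
def IsSubdivision {V W : Type*} (G : SimpleGraph V) (H : SimpleGraph W) : Prop :=
  IsSubdivisionWithin G H Set.univ

/-- `D(H)`: the set of edges of `H` whose deletion leaves a planar graph. -/
def Dset {U : Type*} (H : SimpleGraph U) : Set (Sym2 U) :=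
  {e | e ∈ H.edgeSet ∧ Planar (H.deleteEdges {e})}

/-- `G[A]` together with all edges between vertices of `T` (`T ⊆ A` intended). -/
def deltaGraph {V : Type*} (G : SimpleGraph V) (A T : Set V) : SimpleGraph A :=
  SimpleGraph.fromRel fun a b => G.Adj a.1 b.1 ∨ (a.1 ∈ T ∧ b.1 ∈ T)

/-- `G[A]^Y` for the separation `{G[A], G[B]}`: add a new vertex joined to `A ∩ B`. -/
def sepY {V : Type*} (G : SimpleGraph V) (A B : Set V) : SimpleGraph (Option A) :=
  SimpleGraph.fromRel fun x y =>
    match x, y with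
    | some a, some b => G.Adj a.1 b.1
    | none, some a => a.1 ∈ A ∩ B
    | _, _ => False

/-- `G₂` is obtained from `G` by adding isolated vertices. -/
def AddIsolated {V₂ V : Type*} (G₂ : SimpleGraph V₂) (G : SimpleGraph V) : Prop :=
  ∃ f : V ↪ V₂, (∀ a b : V, G₂.Adj (f a) (f b) ↔ G.Adj a b) ∧
    ∀ x : V₂, x ∉ Set.range f → ∀ y : V₂, ¬ G₂.Adj x y

/-- The set of non-isolated vertices of `G` (so `G* = G.induce (core G)`). -/
def core {V : Type*} (G : SimpleGraph V) : Set V := {v | ∃ w, G.Adj v w}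

/-- `G` is obtained from `G'` by 3-summing wheels onto distinct triangles of `G'`. -/
def SumWheelsOnto {V U : Type*} (G : SimpleGraph V) (G' : SimpleGraph U) : Prop :=
  ∃ (g : U ↪ V) (k : ℕ) (Wp : Fin k → Set V) (T : Fin k → Set U),
    (∀ i, (T i).ncard = 3) ∧
    (∀ i, ∀ x ∈ T i, ∀ y ∈ T i, x ≠ y → G'.Adj x y) ∧
    Function.Injective T ∧
    (∀ i, Disjoint (Wp i) (Set.range ⇑g)) ∧
    (Pairwise fun i j => Disjoint (Wp i) (Wp j)) ∧
    (Set.range ⇑g ∪ ⋃ i, Wp i) = Set.univ ∧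
    (∀ i, IsWheel (deltaGraph G (Wp i ∪ ⇑g '' T i) (⇑g '' T i))) ∧
    (∀ a b : U, G.Adj (g a) (g b) → G'.Adj a b) ∧
    (∀ a b : U, G'.Adj a b → (G.Adj (g a) (g b) ∨ ∃ i, a ∈ T i ∧ b ∈ T i)) ∧
    (∀ ⦃x y : V⦄, G.Adj x y → (x ∈ Set.range ⇑g ∧ y ∈ Set.range ⇑g) ∨
      ∃ i, x ∈ Wp i ∪ ⇑g '' T i ∧ y ∈ Wp i ∪ ⇑g '' T i) ∧
    (∀ i, ∀ x ∈ Wp i, ∀ ⦃y : V⦄, G.Adj x y → y ∈ Wp i ∪ ⇑g '' T i)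

/-- `H` has an edge whose deletion and contraction are both nonplanar. -/
def HasBadEdge {V : Type*} (H : SimpleGraph V) : Prop :=
  ∃ u v : V, H.Adj u v ∧ ¬ Planar (H.deleteEdges {s(u, v)}) ∧ ¬ Planar (contractEdge H u v)

/-!
The vertices created by subdivision have degree two, so a connected set of them has at most two
neighbours outside itself. In a model of `K₅` or `K₃,₃`, whose vertices have degree at least three,
every branch set therefore contains an original vertex, and the model survives in the *torso*: the
graph on the original vertices in which two are joined when `G` links them through subdivision
vertices. Thus a graph with such inner vertices is planar as soon as its torso is.

The torso of `G` lies in `H`. If `e` is an edge of the path replacing `uv`, the torso of `G \ e`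
lies in `H \ uv`, because a link through inner vertices traverses a whole path; this settles
`uv ∈ D(H)`. Otherwise `uv` is not subdivided, and contracting it commutes with forming the torso,
so the planarity of `H / uv` passes to `G / uv`. Nonplanarity passes from `H` to `G` since `H` is a
minor of `G`. Added isolated vertices are inner vertices of degree zero, to which the same transfer
applies.
-/

section Connectivity

variable {U V : Type*} {F : SimpleGraph U} {G : SimpleGraph V} {s : Set U} {D : Set V}

lemma induce_connected_induction (hD : (G.induce D).Connected) {P : V → Prop} {x₀ : V}
    (hx₀ : x₀ ∈ D) (base : P x₀) (step : ∀ x ∈ D, ∀ y ∈ D, G.Adj x y → P x → P y) :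
    ∀ x ∈ D, P x := by
  intro x hx
  have hreach := (reachable_iff_reflTransGen _ _).1 (hD.preconnected ⟨x₀, hx₀⟩ ⟨x, hx⟩)
  suffices ∀ z, Relation.ReflTransGen (G.induce D).Adj ⟨x₀, hx₀⟩ z → P z from this _ hreach
  intro z hz
  induction hz with
  | refl => exact base
  | @tail y z _ hyz ih => exact step y y.2 z z.2 hyz ih

lemma induce_biUnion_connected {C : U → Set V} (hs : (F.induce s).Connected)
    (hC : ∀ a ∈ s, (G.induce (C a)).Connected)
    (hadj : ∀ a ∈ s, ∀ b ∈ s, F.Adj a b → ∃ x ∈ C a, ∃ y ∈ C b, G.Adj x y) :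
    (G.induce (⋃ a ∈ s, C a)).Connected := by
  obtain ⟨⟨a₀, ha₀⟩⟩ := hs.nonempty
  obtain ⟨⟨x₀, hx₀⟩⟩ := (hC a₀ ha₀).nonempty
  have key : ∀ b ∈ s, ∃ t ⊆ ⋃ a ∈ s, C a, x₀ ∈ t ∧ C b ⊆ t ∧ (G.induce t).Connected := by
    refine induce_connected_induction hs ha₀
      ⟨C a₀, Set.subset_biUnion_of_mem ha₀, hx₀, subset_rfl, hC a₀ ha₀⟩ ?_
    rintro a ha b hb hab ⟨t, hts, hxt, hat, ht⟩
    obtain ⟨x, hx, y, hy, hxy⟩ := hadj a ha b hb hab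
    exact ⟨t ∪ C b, Set.union_subset hts (Set.subset_biUnion_of_mem hb), Or.inl hxt,
      Set.subset_union_right,
      connected_induce_union ht.preconnected (hC b hb).preconnected (hat hx) hy hxy⟩
  refine induce_connected_of_patches x₀ (Set.mem_biUnion ha₀ hx₀) fun {y} hy => ?_
  obtain ⟨b, hb, hyb⟩ := Set.mem_iUnion₂.1 hy
  obtain ⟨t, hts, hxt, hbt, ht⟩ := key b hb
  exact ⟨t, hts, hxt, hbt hyb, ht.preconnected _ _⟩

end Connectivity

section Minor

variable {U V W : Type*} {F : SimpleGraph U} {G : SimpleGraph V} {K : SimpleGraph W}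

lemma isMinor_of_injective (f : U → V) (hf : f.Injective)
    (hadj : ∀ ⦃a b⦄, F.Adj a b → G.Adj (f a) (f b)) : IsMinor F G := by
  refine ⟨fun a => {f a}, fun a => Set.singleton_nonempty _, fun a => ?_, fun a b hab => ?_,
    fun a b hab => ⟨f a, rfl, f b, rfl, hadj hab⟩⟩
  · rw [induce_singleton_eq_top]
    exact connected_top
  · exact Set.disjoint_singleton.2 (hf.ne hab)

lemma IsMinor.trans (hKF : IsMinor K F) (hFG : IsMinor F G) : IsMinor K G := by
  obtain ⟨B, hBne, hBconn, hBdisj, hBadj⟩ := hKF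
  obtain ⟨C, hCne, hCconn, hCdisj, hCadj⟩ := hFG
  refine ⟨fun w => ⋃ a ∈ B w, C a, fun w => ?_, fun w => ?_, fun w₁ w₂ hw => ?_,
    fun w₁ w₂ hw => ?_⟩
  · obtain ⟨a, ha⟩ := hBne w
    obtain ⟨x, hx⟩ := hCne a
    exact ⟨x, Set.mem_biUnion ha hx⟩
  · exact induce_biUnion_connected (hBconn w) (fun a _ => hCconn a) fun a _ b _ => @hCadj a b
  · simp only [Set.disjoint_iUnion_left, Set.disjoint_iUnion_right]
    exact fun b hb a ha => hCdisj fun hab => Set.disjoint_left.1 (hBdisj hw) ha (hab ▸ hb)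
  · obtain ⟨a, ha, b, hb, hab⟩ := hBadj hw
    obtain ⟨x, hx, y, hy, hxy⟩ := hCadj hab
    exact ⟨x, Set.mem_biUnion ha hx, y, Set.mem_biUnion hb hy, hxy⟩

lemma Planar.of_isMinor (hG : Planar G) (h : IsMinor F G) : Planar F :=
  ⟨fun hm => hG.1 (hm.trans h), fun hm => hG.2 (hm.trans h)⟩

lemma Planar.mono {F G : SimpleGraph V} (hG : Planar G) (h : F ≤ G) : Planar F :=
  hG.of_isMinor (isMinor_of_injective id Function.injective_id h)

end Minor

section OuterBoundary

lemma encard_sdiff_singleton_le {α : Type*} {s : Set α} {a : α} {n : ℕ∞}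
    (hs : s.encard ≤ n + 1) (ha : a ∈ s) : (s \ {a}).encard ≤ n := by
  rw [← Set.encard_sdiff_singleton_add_one ha] at hs
  exact (ENat.add_le_add_iff_right ENat.one_ne_top).1 hs

/-- The vertices outside `D` that have a neighbour in `D`. -/
def outerBoundary {V : Type*} (G : SimpleGraph V) (D : Set V) : Set V :=
  {y | y ∉ D ∧ ∃ x ∈ D, G.Adj x y}

variable {V : Type*} {G : SimpleGraph V} {D E : Set V} {x : V}

lemma outerBoundary_insert_subset :
    outerBoundary G (insert x D) ⊆ (outerBoundary G D \ {x}) ∪ (G.neighborSet x \ D) := by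
  rintro y ⟨hy, z, rfl | hz, hzy⟩
  · exact Or.inr ⟨hzy, fun h => hy (Or.inr h)⟩
  · exact Or.inl ⟨⟨fun h => hy (Or.inr h), z, hz, hzy⟩, fun h => hy (Or.inl h)⟩

-- Absorbing the boundary vertex `x` removes it from the boundary, and adds at most one of its two
-- neighbours, the other one lying in `D`.
lemma encard_outerBoundary_insert_le_two (hD : (outerBoundary G D).encard ≤ 2)
    (hx : x ∈ outerBoundary G D) (hdeg : (G.neighborSet x).encard ≤ 2) :
    (outerBoundary G (insert x D)).encard ≤ 2 := by
  obtain ⟨d, hd, hdx⟩ := hx.2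
  rw [← one_add_one_eq_two] at hD hdeg ⊢
  have hnew : (G.neighborSet x \ D).encard ≤ 1 :=
    (Set.encard_le_encard (Set.sdiff_subset_sdiff_right (Set.singleton_subset_iff.2 hd))).trans
      (encard_sdiff_singleton_le hdeg hdx.symm)
  calc (outerBoundary G (insert x D)).encard
      ≤ (outerBoundary G D \ {x}).encard + (G.neighborSet x \ D).encard :=
        (Set.encard_le_encard outerBoundary_insert_subset).trans (Set.encard_union_le _ _)
    _ ≤ 1 + 1 := add_le_add (encard_sdiff_singleton_le hD hx) hnew

lemma exists_superset_mem_encard_outerBoundary_le_two (hconn : (G.induce D).Connected)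
    (hdeg : ∀ x ∈ D, (G.neighborSet x).encard ≤ 2) (hED : E ⊆ D) (hne : E.Nonempty)
    (hE : (outerBoundary G E).encard ≤ 2) :
    ∀ t ∈ D, ∃ D', E ⊆ D' ∧ D' ⊆ D ∧ t ∈ D' ∧ (outerBoundary G D').encard ≤ 2 := by
  obtain ⟨x, hx⟩ := hne
  refine induce_connected_induction hconn (hED hx) ⟨E, subset_rfl, hED, hx, hE⟩ ?_
  rintro y - z hz hyz ⟨D', hED', hD', hy, hcard⟩
  by_cases hzD' : z ∈ D'
  · exact ⟨D', hED', hD', hzD', hcard⟩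
  · exact ⟨insert z D', hED'.trans (Set.subset_insert z D'), Set.insert_subset hz hD',
      Set.mem_insert z D', encard_outerBoundary_insert_le_two hcard ⟨hzD', y, hy, hyz⟩ (hdeg z hz)⟩

lemma exists_superset_encard_outerBoundary_le_two (hconn : (G.induce D).Connected)
    (hdeg : ∀ x ∈ D, (G.neighborSet x).encard ≤ 2) (hE : E.Finite) (hED : E ⊆ D) :
    ∃ D', E ⊆ D' ∧ D' ⊆ D ∧ D'.Nonempty ∧ (outerBoundary G D').encard ≤ 2 := by
  induction E, hE using Set.Finite.induction_on with
  | empty =>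
    obtain ⟨⟨x, hx⟩⟩ := hconn.nonempty
    have hsub : outerBoundary G {x} ⊆ G.neighborSet x := by
      rintro y ⟨-, z, rfl, hzy⟩
      exact hzy
    exact ⟨{x}, Set.empty_subset _, Set.singleton_subset_iff.2 hx, Set.singleton_nonempty x,
      (Set.encard_le_encard hsub).trans (hdeg x hx)⟩
  | @insert t E _ _ ih =>
    obtain ⟨D₁, hED₁, hD₁, hne, hcard₁⟩ := ih ((Set.subset_insert t E).trans hED)
    obtain ⟨D₂, hD₁₂, hD₂, ht, hcard₂⟩ := exists_superset_mem_encard_outerBoundary_le_two hconn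
      hdeg hD₁ hne hcard₁ t (hED (Set.mem_insert t E))
    exact ⟨D₂, Set.insert_subset ht (hED₁.trans hD₁₂), hD₂, ⟨t, ht⟩, hcard₂⟩

-- Three boundary vertices would all be boundary vertices of a part of `D` grown vertex by vertex
-- to contain a neighbour of each.
lemma encard_outerBoundary_le_two (hconn : (G.induce D).Connected)
    (hdeg : ∀ x ∈ D, (G.neighborSet x).encard ≤ 2) : (outerBoundary G D).encard ≤ 2 := by
  by_contra! hlt
  obtain ⟨Y, hYD, hY⟩ := Set.exists_subset_encard_eq (Order.add_one_le_of_lt hlt)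
  have hYfin : Y.Finite := Set.finite_of_encard_eq_coe (k := 3) hY
  choose! d hdD hdY using fun y (hy : y ∈ Y) => (hYD hy).2
  obtain ⟨D', hdD', hD', -, hcard⟩ := exists_superset_encard_outerBoundary_le_two hconn hdeg
    (hYfin.image d) (Set.image_subset_iff.2 hdD)
  have hYD' : Y ⊆ outerBoundary G D' := fun y hy =>
    ⟨fun h => (hYD hy).1 (hD' h), d y, hdD' (Set.mem_image_of_mem d hy), hdY y hy⟩
  exact absurd (hY ▸ (Set.encard_le_encard hYD').trans hcard) (by decide)

end OuterBoundary

section MinDegree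

lemma three_le_encard_neighborSet_K5 (w : Fin 5) : 3 ≤ (K5.neighborSet w).encard := by
  have h : K5.neighborSet w = {w}ᶜ := by
    ext v
    simp [K5, eq_comm]
  rw [h, Set.encard_eq_coe_toFinset_card]
  norm_num [Finset.card_compl]

lemma three_le_encard_neighborSet_K33 (w : Fin 3 ⊕ Fin 3) : 3 ≤ (K33.neighborSet w).encard := by
  rcases w with a | a
  · have h : K33.neighborSet (.inl a) = Set.range Sum.inr := by
      ext (v | v) <;> simp [K33]
    simpa [h] using (Sum.inr_injective (α := Fin 3) (β := Fin 3)).encard_range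
  · have h : K33.neighborSet (.inr a) = Set.range Sum.inl := by
      ext (v | v) <;> simp [K33]
    simpa [h] using (Sum.inl_injective (α := Fin 3) (β := Fin 3)).encard_range

end MinDegree

section Torso

variable {U V W : Type*} {K : SimpleGraph W} {F : SimpleGraph U} {G : SimpleGraph V} {f : U → V}
  {D : Set V} {a b : U} {x y : V}

/-- `G` has a walk from the branch vertex `f a` to `x` all of whose later vertices are inner,
that is, outside the range of `f`. -/
def Sees (G : SimpleGraph V) (f : U → V) (a : U) : V → Prop :=
  Relation.ReflTransGen (fun x y => G.Adj x y ∧ y ∉ Set.range f) (f a)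

/-- The torso of `G` on the branch vertices `f`: two of them are adjacent when a walk of `G`
joins them through inner vertices only. -/
def torso (G : SimpleGraph V) (f : U → V) : SimpleGraph U where
  Adj a b := a ≠ b ∧ ∃ x y, Sees G f a x ∧ G.Adj x y ∧ Sees G f b y
  symm := ⟨fun _ _ ⟨hab, x, y, hx, hxy, hy⟩ => ⟨hab.symm, y, x, hy, hxy.symm, hx⟩⟩
  loopless := ⟨fun _ h => h.1 rfl⟩

lemma Sees.refl (a : U) : Sees G f a (f a) := Relation.ReflTransGen.refl

lemma Sees.eq_of_injective (hf : f.Injective) (h : Sees G f a (f b)) : a = b := by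
  rcases Relation.ReflTransGen.cases_tail h with hab | ⟨x, -, -, hb⟩
  · exact (hf hab).symm
  · exact absurd (Set.mem_range_self b) hb

lemma exists_sees_adj_of_torso_adj (h : (torso G f).Adj a b) :
    ∃ x, Sees G f a x ∧ G.Adj x (f b) := by
  obtain ⟨-, x, y, hx, hxy, hy⟩ := h
  induction hy generalizing x with
  | refl => exact ⟨x, hx, hxy⟩
  | @tail z y _ hzy ih => exact ih y (hx.tail ⟨hxy, hzy.2⟩) hzy.1.symm

lemma exists_reachable_sees (hD : (G.induce D).Connected) (ha : a ∈ f ⁻¹' D) :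
    ∀ x ∈ D, ∃ c, ∃ hc : c ∈ f ⁻¹' D,
      Sees G f c x ∧ ((torso G f).induce (f ⁻¹' D)).Reachable ⟨a, ha⟩ ⟨c, hc⟩ := by
  refine induce_connected_induction hD ha ⟨a, ha, .refl a, .refl _⟩ ?_
  rintro x - y hy hxy ⟨c, hc, hcx, hreach⟩
  by_cases hyf : y ∈ Set.range f
  · obtain ⟨b, rfl⟩ := hyf
    refine ⟨b, hy, .refl b, ?_⟩
    rcases eq_or_ne c b with rfl | hcb
    · exact hreach
    · have hadj : ((torso G f).induce (f ⁻¹' D)).Adj ⟨c, hc⟩ ⟨b, hy⟩ :=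
        ⟨hcb, x, f b, hcx, hxy, .refl b⟩
      exact hreach.trans hadj.reachable
  · exact ⟨c, hc, hcx.tail ⟨hxy, hyf⟩, hreach⟩

lemma connected_torso_induce_preimage (hf : f.Injective) (hD : (G.induce D).Connected)
    (hne : (f ⁻¹' D).Nonempty) : ((torso G f).induce (f ⁻¹' D)).Connected := by
  obtain ⟨a, ha⟩ := hne
  refine (connected_iff_exists_forall_reachable _).2 ⟨⟨a, ha⟩, fun ⟨b, hb⟩ => ?_⟩
  obtain ⟨c, hc, hcb, hreach⟩ := exists_reachable_sees hD ha (f b) hb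
  obtain rfl := hcb.eq_of_injective hf
  exact hreach

lemma encard_neighborSet_le_encard_outerBoundary {B : W → Set V}
    (hdisj : Pairwise fun w₁ w₂ => Disjoint (B w₁) (B w₂))
    (hadj : ∀ ⦃w₁ w₂⦄, K.Adj w₁ w₂ → ∃ x ∈ B w₁, ∃ y ∈ B w₂, G.Adj x y) (w : W) :
    (K.neighborSet w).encard ≤ (outerBoundary G (B w)).encard := by
  choose d hd y hy hdy using fun v (hv : K.Adj w v) => hadj hv
  have hmem (v : K.neighborSet w) : y v v.2 ∈ outerBoundary G (B w) :=
    ⟨Set.disjoint_right.1 (hdisj v.2.ne) (hy v v.2), d v v.2, hd v v.2, hdy v v.2⟩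
  have hinj (u v : K.neighborSet w) (huv : y u u.2 = y v v.2) : u = v := by
    by_contra hne
    exact Set.disjoint_left.1 (hdisj (Subtype.coe_ne_coe.2 hne)) (hy u u.2) (huv ▸ hy v v.2)
  exact (⟨fun v => ⟨_, hmem v⟩, fun u v h => hinj u v (congrArg Subtype.val h)⟩ :
    K.neighborSet w ↪ outerBoundary G (B w)).encard_le

-- A branch set avoiding the range of `f` would have at most two neighbours, too few for `K`.
lemma IsMinor.torso (hf : f.Injective) (hdeg : ∀ x ∉ Set.range f, (G.neighborSet x).encard ≤ 2)
    (hK : ∀ w, 3 ≤ (K.neighborSet w).encard) (h : IsMinor K G) : IsMinor K (torso G f) := by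
  obtain ⟨B, -, hconn, hdisj, hadj⟩ := h
  have hne : ∀ w, (f ⁻¹' B w).Nonempty := by
    intro w
    by_contra hempty
    have hinner : ∀ x ∈ B w, x ∉ Set.range f := by
      rintro _ hx ⟨a, rfl⟩
      exact hempty ⟨a, hx⟩
    have hthree := (hK w).trans (encard_neighborSet_le_encard_outerBoundary hdisj hadj w)
    have htwo := encard_outerBoundary_le_two (hconn w) fun x hx => hdeg x (hinner x hx)
    exact absurd (hthree.trans htwo) (by decide)
  refine ⟨fun w => f ⁻¹' B w, hne, fun w => connected_torso_induce_preimage hf (hconn w) (hne w),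
    fun w₁ w₂ hw => (hdisj hw).preimage f, fun w₁ w₂ hw => ?_⟩
  obtain ⟨x, hx, y, hy, hxy⟩ := hadj hw
  obtain ⟨a, ha, hax, -⟩ := exists_reachable_sees (hconn w₁) (hne w₁).some_mem x hx
  obtain ⟨b, hb, hby, -⟩ := exists_reachable_sees (hconn w₂) (hne w₂).some_mem y hy
  have hab : a ≠ b := fun h => Set.disjoint_left.1 (hdisj hw.ne) ha (h ▸ hb)
  exact ⟨a, ha, b, hb, hab, x, y, hax, hxy, hby⟩

lemma Planar.of_torso_le (hF : Planar F) (hle : torso G f ≤ F) (hf : f.Injective)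
    (hdeg : ∀ x ∉ Set.range f, (G.neighborSet x).encard ≤ 2) : Planar G :=
  have hT := hF.mono hle
  ⟨fun hm => hT.1 (hm.torso hf hdeg three_le_encard_neighborSet_K5),
    fun hm => hT.2 (hm.torso hf hdeg three_le_encard_neighborSet_K33)⟩

end Torso

section Contraction

variable {U V : Type*} {F : SimpleGraph U} {G : SimpleGraph V} {f : U → V} {φ : V → V}
  {ψ : U → U} {a : U} {x z : V}

lemma contractEdge_eq_map [DecidableEq V] (G : SimpleGraph V) {u w : V} (huw : u ≠ w) :
    contractEdge G u w = G.map (Function.update id w u) := by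
  ext x y
  rw [contractEdge, fromRel_adj, SimpleGraph.map_adj']
  refine and_congr_right fun hxy => ⟨?_, ?_⟩
  · have hid {v : V} (hv : v ≠ w) : Function.update id w u v = v := Function.update_of_ne hv u id
    have hw : Function.update id w u w = u := Function.update_self w u id
    rintro (⟨hx, hy, h | ⟨rfl, h⟩ | ⟨rfl, h⟩⟩ | ⟨hy, hx, h | ⟨rfl, h⟩ | ⟨rfl, h⟩⟩)
    · exact ⟨x, y, h, hid hx, hid hy⟩
    · exact ⟨w, y, h, hw, hid hy⟩
    · exact ⟨x, w, h, hid hx, hw⟩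
    · exact ⟨x, y, h.symm, hid hx, hid hy⟩
    · exact ⟨x, w, h.symm, hid hx, hw⟩
    · exact ⟨w, y, h.symm, hw, hid hy⟩
  · rintro ⟨x', y', h, rfl, rfl⟩
    simp only [Function.update_apply, id_eq] at hxy ⊢
    grind [SimpleGraph.Adj.symm]

lemma eq_of_map_notMem_range (hφf : ∀ a, φ (f a) = f (ψ a)) (hφ : ∀ x ∉ Set.range f, φ x = x)
    (hx : x ∉ Set.range f) (hz : φ z = x) : z = x := by
  rw [← hz, hφ]
  rintro ⟨a, rfl⟩
  exact hx ⟨ψ a, by rw [← hz, hφf]⟩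

lemma exists_eq_of_map_eq (hf : f.Injective) (hφf : ∀ a, φ (f a) = f (ψ a))
    (hφ : ∀ x ∉ Set.range f, φ x = x) (hz : φ z = f a) : ∃ b, ψ b = a ∧ f b = z := by
  by_cases hzf : z ∈ Set.range f
  · obtain ⟨b, rfl⟩ := hzf
    exact ⟨b, hf (by rw [← hφf, hz]), rfl⟩
  · exact absurd ⟨a, by rw [← hz, hφ z hzf]⟩ hzf

lemma Sees.exists_of_map (hf : f.Injective) (hφf : ∀ a, φ (f a) = f (ψ a))
    (hφ : ∀ x ∉ Set.range f, φ x = x) (h : Sees (G.map φ) f a x) (hz : φ z = x) :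
    ∃ b, ψ b = a ∧ Sees G f b z := by
  induction h generalizing z with
  | refl =>
    obtain ⟨b, hb, rfl⟩ := exists_eq_of_map_eq hf hφf hφ hz
    exact ⟨b, hb, .refl b⟩
  | tail _ hyx ih =>
    obtain ⟨⟨-, y', x', hadj, hy', hx'⟩, hx⟩ := hyx
    obtain ⟨b, hb, hby⟩ := ih hy'
    have hzx := eq_of_map_notMem_range hφf hφ hx hz
    have hxx := eq_of_map_notMem_range hφf hφ hx hx'
    exact ⟨b, hb, hby.tail ⟨hzx ▸ hxx ▸ hadj, hzx ▸ hx⟩⟩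

lemma torso_map_le (hf : f.Injective) (hφf : ∀ a, φ (f a) = f (ψ a))
    (hφ : ∀ x ∉ Set.range f, φ x = x) : torso (G.map φ) f ≤ (torso G f).map ψ := by
  rintro a b ⟨hab, x, y, hx, ⟨-, x', y', hxy, hx', hy'⟩, hy⟩
  obtain ⟨a', rfl, ha'⟩ := hx.exists_of_map hf hφf hφ hx'
  obtain ⟨b', rfl, hb'⟩ := hy.exists_of_map hf hφf hφ hy'
  exact ⟨hab, a', b', ⟨ne_of_apply_ne ψ hab, x', y', ha', hxy, hb'⟩, rfl, rfl⟩

lemma neighborSet_map_subset (hφf : ∀ a, φ (f a) = f (ψ a)) (hφ : ∀ x ∉ Set.range f, φ x = x)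
    (hx : x ∉ Set.range f) : (G.map φ).neighborSet x ⊆ φ '' G.neighborSet x := by
  rintro y ⟨-, x', y', hxy, hx', rfl⟩
  exact ⟨y', eq_of_map_notMem_range hφf hφ hx hx' ▸ hxy, rfl⟩

lemma Planar.contractEdge_of_torso_le {u w : U} (hF : Planar (contractEdge F u w))
    (hle : torso G f ≤ F) (hf : f.Injective)
    (hdeg : ∀ x ∉ Set.range f, (G.neighborSet x).encard ≤ 2) (huw : u ≠ w) :
    Planar (contractEdge G (f u) (f w)) := by
  classical
  have hφf (a) : Function.update id (f w) (f u) (f a) = f (Function.update id w u a) := by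
    simp only [Function.update_apply, hf.eq_iff, id_eq, apply_ite f]
  have hφ : ∀ x ∉ Set.range f, Function.update id (f w) (f u) x = x := fun x hx =>
    Function.update_of_ne (fun h => hx ⟨w, h.symm⟩) _ _
  rw [contractEdge_eq_map F huw] at hF
  rw [contractEdge_eq_map G (hf.ne huw)]
  refine hF.of_torso_le ((torso_map_le hf hφf hφ).trans (map_monotone _ hle)) hf fun x hx => ?_
  exact (Set.encard_le_encard (neighborSet_map_subset hφf hφ hx)).trans
    ((Set.encard_image_le _ _).trans (hdeg x hx))

end Contraction

section AddIsolated

variable {V V₂ : Type*} {G : SimpleGraph V} {G₂ : SimpleGraph V₂}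

lemma AddIsolated.isMinor (h : AddIsolated G₂ G) : IsMinor G G₂ := by
  obtain ⟨f, hadj, -⟩ := h
  exact isMinor_of_injective f f.injective fun a b => (hadj a b).2

lemma AddIsolated.planar (h : AddIsolated G₂ G) (hG : Planar G) : Planar G₂ := by
  obtain ⟨f, hadj, hiso⟩ := h
  refine hG.of_torso_le (fun a b hab => ?_) f.injective fun x hx => ?_
  · obtain ⟨x, hax, hxb⟩ := exists_sees_adj_of_torso_adj hab
    rcases Relation.ReflTransGen.cases_tail hax with rfl | ⟨y, -, -, hx⟩
    · exact (hadj a b).1 hxb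
    · exact absurd hxb (hiso x hx _)
  · have hempty : G₂.neighborSet x = ∅ := Set.eq_empty_of_forall_notMem (hiso x hx)
    simp [hempty]

lemma AlmostPlanar.addIsolated (hG : AlmostPlanar G) (h : AddIsolated G₂ G) :
    AlmostPlanar G₂ := by
  refine ⟨fun hpl => hG.1 (hpl.of_isMinor h.isMinor), fun x y hxy => ?_⟩
  obtain ⟨f, hadj, hiso⟩ := h
  obtain ⟨a, rfl⟩ : x ∈ Set.range f := by_contra fun hx => hiso x hx y hxy
  obtain ⟨b, rfl⟩ : y ∈ Set.range f := by_contra fun hy => hiso y hy _ hxy.symm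
  refine (hG.2 ((hadj a b).1 hxy)).imp (fun hdel => ?_) fun hcon => ?_
  · refine AddIsolated.planar ⟨f, fun c d => ?_, fun x hx y h => hiso x hx y h.1⟩ hdel
    simp [hadj]
  · refine AddIsolated.planar ⟨f, fun c d => ?_, fun x hx y h => ?_⟩ hcon
    · simp [contractEdge, hadj, f.injective.eq_iff]
    · simp only [contractEdge, fromRel_adj] at h
      grind [hiso x hx, SimpleGraph.Adj.symm]

end AddIsolated

section Subdivision

/-- A realisation of `G` as a subdivision of `H`: branch vertices for the vertices of `H`, and
for each edge of `H` a path of `G` joining its ends, these paths being internally disjoint,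
avoiding further branch vertices, and covering `G`. An edge of `H` carries one path for each
orientation, the reverses of one another. -/
structure SubdivisionModel {V U : Type*} (G : SimpleGraph V) (H : SimpleGraph U) where
  branch : U ↪ V
  path : ∀ ⦃u v : U⦄, H.Adj u v → G.Walk (branch u) (branch v)
  isPath : ∀ ⦃u v : U⦄ (h : H.Adj u v), (path h).IsPath
  path_symm : ∀ ⦃u v : U⦄ (h : H.Adj u v), path h.symm = (path h).reverse
  eq_or_eq_of_mem_support : ∀ ⦃u v : U⦄ (h : H.Adj u v) (w : U),
    branch w ∈ (path h).support → w = u ∨ w = v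
  mem_range_of_mem_support : ∀ ⦃u v u' v' : U⦄ (h : H.Adj u v) (h' : H.Adj u' v'),
    s(u, v) ≠ s(u', v') → ∀ x : V, x ∈ (path h).support → x ∈ (path h').support →
      x ∈ Set.range branch
  mem_range_or_exists_mem_support : ∀ x : V, x ∈ Set.range branch ∨
    ∃ (u v : U) (h : H.Adj u v), x ∈ (path h).support
  exists_mem_edges : ∀ e ∈ G.edgeSet, ∃ (u v : U) (h : H.Adj u v), e ∈ (path h).edges

lemma exists_getVert_eq_of_mem_edges {V : Type*} {G : SimpleGraph V} {u v x y : V}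
    {p : G.Walk u v} (hp : p.IsPath) {i : ℕ} (hi : i ≤ p.length) (hix : p.getVert i = x)
    (h : s(x, y) ∈ p.edges) :
    ∃ j ≤ p.length, p.getVert j = y ∧ (j = i + 1 ∨ i = j + 1) := by
  obtain ⟨k, hk, hxy⟩ := p.mk_mem_edges_iff_exists.1 h
  rcases Sym2.eq_iff.1 hxy with ⟨hkx, hky⟩ | ⟨hky, hkx⟩
  · obtain rfl : k = i := hp.getVert_injOn hk.le hi (hkx.trans hix.symm)
    exact ⟨k + 1, hk, hky, Or.inl rfl⟩
  · obtain rfl : k + 1 = i := hp.getVert_injOn hk hi (hkx.trans hix.symm)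
    exact ⟨k, hk.le, hky, Or.inr rfl⟩

lemma eq_of_mem_edges_of_length_eq_one {V : Type*} {G : SimpleGraph V} {u v x y : V}
    {p : G.Walk u v} (hp : p.length = 1) (h : s(x, y) ∈ p.edges) : s(x, y) = s(u, v) := by
  obtain ⟨i, hi, hxy⟩ := p.mk_mem_edges_iff_exists.1 h
  obtain rfl : i = 0 := by omega
  rw [← hxy, p.getVert_zero, zero_add, ← hp, p.getVert_length]

namespace SubdivisionModel

variable {V U : Type*} {G G' : SimpleGraph V} {H : SimpleGraph U} (M : SubdivisionModel G H)
  {a b u v : U} {x y : V} {e : Sym2 V}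

lemma mem_edges_symm (h : H.Adj u v) : e ∈ (M.path h.symm).edges ↔ e ∈ (M.path h).edges := by
  rw [M.path_symm h, Walk.edges_reverse, List.mem_reverse]

lemma mem_edges_of_mem_support (h : H.Adj u v) (hx : x ∈ (M.path h).support)
    (hxr : x ∉ Set.range M.branch) (hxy : G.Adj x y) : s(x, y) ∈ (M.path h).edges := by
  obtain ⟨u', v', h', he⟩ := M.exists_mem_edges s(x, y) hxy
  have huv : s(u, v) = s(u', v') := by
    by_contra hne
    exact hxr (M.mem_range_of_mem_support h h' hne x hx (Walk.fst_mem_support_of_mem_edges _ he))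
  rcases Sym2.eq_iff.1 huv with ⟨rfl, rfl⟩ | ⟨rfl, rfl⟩
  · exact he
  · exact (M.mem_edges_symm h).1 he

lemma exists_mem_edges_of_adj_branch (hay : G.Adj (M.branch a) y) :
    ∃ (d : U) (h : H.Adj a d), s(M.branch a, y) ∈ (M.path h).edges := by
  obtain ⟨u, v, h, he⟩ := M.exists_mem_edges s(M.branch a, y) hay
  rcases M.eq_or_eq_of_mem_support h a (Walk.fst_mem_support_of_mem_edges _ he) with rfl | rfl
  · exact ⟨v, h, he⟩
  · exact ⟨u, h.symm, (M.mem_edges_symm h).2 he⟩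

lemma encard_neighborSet_le_two (hx : x ∉ Set.range M.branch) :
    (G.neighborSet x).encard ≤ 2 := by
  obtain ⟨u, v, h, hxh⟩ := (M.mem_range_or_exists_mem_support x).resolve_left hx
  obtain ⟨i, rfl, hi⟩ := Walk.mem_support_iff_exists_getVert.1 hxh
  have hsub : G.neighborSet ((M.path h).getVert i) ⊆
      {(M.path h).getVert (i + 1), (M.path h).getVert (i - 1)} := by
    intro y hxy
    obtain ⟨j, -, rfl, rfl | rfl⟩ := exists_getVert_eq_of_mem_edges (M.isPath h) hi rfl
      (M.mem_edges_of_mem_support h hxh hx hxy)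
    · exact Or.inl rfl
    · exact Or.inr rfl
  exact (Set.encard_le_encard hsub).trans 
    ((Set.encard_insert_le _ _).trans_eq (by rw [Set.encard_singleton, one_add_one_eq_two]))

lemma exists_getVert_eq_of_sees_of_adj (hle : G' ≤ G) (hax : Sees G' M.branch a x)
    (hxy : G'.Adj x y) : ∃ (d : U) (h : H.Adj a d), ∃ i ≤ (M.path h).length,
      (M.path h).getVert i = y ∧
        ∀ j < i, G'.Adj ((M.path h).getVert j) ((M.path h).getVert (j + 1)) := by
  induction hax generalizing y with
  | refl =>
    obtain ⟨d, h, he⟩ := M.exists_mem_edges_of_adj_branch (hle hxy)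
    obtain ⟨j, hj, rfl, rfl | hj0⟩ := exists_getVert_eq_of_mem_edges (M.isPath h)
      (Nat.zero_le _) (M.path h).getVert_zero he
    · refine ⟨d, h, 1, hj, rfl, fun j hj => ?_⟩
      obtain rfl := Nat.lt_one_iff.1 hj
      rwa [Walk.getVert_zero]
    · exact absurd hj0.symm j.succ_ne_zero
  | tail _ hzx ih =>
    obtain ⟨d, h, i, hi, rfl, hpre⟩ := ih hzx.1
    have he := M.mem_edges_of_mem_support h ((M.path h).getVert_mem_support i) hzx.2 (hle hxy)
    obtain ⟨j, hj, rfl, rfl | rfl⟩ := exists_getVert_eq_of_mem_edges (M.isPath h) hi rfl he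
    · refine ⟨d, h, i + 1, hj, rfl, fun k hk => ?_⟩
      rcases Nat.lt_succ_iff_lt_or_eq.1 hk with hk | rfl
      · exact hpre k hk
      · exact hxy
    · exact ⟨d, h, j, hj, rfl, fun k hk => hpre k (hk.trans j.lt_succ_self)⟩

lemma exists_forall_mem_edgeSet_of_torso_adj (hle : G' ≤ G)
    (hab : (torso G' M.branch).Adj a b) :
    ∃ h : H.Adj a b, ∀ e ∈ (M.path h).edges, e ∈ G'.edgeSet := by
  obtain ⟨x, hax, hxb⟩ := exists_sees_adj_of_torso_adj hab
  obtain ⟨d, h, i, hi, hib, hpre⟩ := M.exists_getVert_eq_of_sees_of_adj hle hax hxb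
  obtain rfl : b = d := (M.eq_or_eq_of_mem_support h b
    (hib ▸ (M.path h).getVert_mem_support i)).resolve_left hab.ne'
  obtain rfl : i = (M.path h).length :=
    (M.isPath h).getVert_injOn hi (le_refl (M.path h).length)
      (hib.trans (M.path h).getVert_length.symm)
  refine ⟨h, fun e he => ?_⟩
  induction e with | h x y
  obtain ⟨j, hj, hxy⟩ := (M.path h).mk_mem_edges_iff_exists.1 he
  exact hxy ▸ hpre j hj

lemma torso_le : torso G M.branch ≤ H := fun _ _ hab =>
  (M.exists_forall_mem_edgeSet_of_torso_adj le_rfl hab).1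

lemma torso_deleteEdges_le (h : H.Adj u v) (he : e ∈ (M.path h).edges) :
    torso (G.deleteEdges {e}) M.branch ≤ H.deleteEdges {s(u, v)} := by
  intro a b hab
  obtain ⟨hadj, hpath⟩ := M.exists_forall_mem_edgeSet_of_torso_adj (deleteEdges_le _) hab
  refine (deleteEdges_adj ..).2 ⟨hadj, fun heq => ?_⟩
  have hnot : e ∉ (M.path hadj).edges := fun h' => by simpa using hpath e h'
  rcases Sym2.eq_iff.1 heq with ⟨rfl, rfl⟩ | ⟨rfl, rfl⟩
  · exact hnot he
  · exact hnot ((M.mem_edges_symm hadj).1 he)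

section BranchSet

variable [LinearOrder U]

/-- The branch set of `a` in the model of `H` in its subdivision: the branch vertex of `a` with
the paths to its larger neighbours, the far end of each path being left out. The order serves to
assign the interior of each path to one of its two ends. -/
def branchSet (a : U) : Set V :=
  insert (M.branch a)
    {x | ∃ (b : U) (h : H.Adj a b), a < b ∧ x ∈ (M.path h).support ∧ x ≠ M.branch b}

lemma eq_of_branch_mem_branchSet (hb : M.branch b ∈ M.branchSet a) : b = a := by
  rcases hb with hb | ⟨c, h, -, hb, hne⟩
  · exact M.branch.injective hb
  · exact (M.eq_or_eq_of_mem_support h b hb).resolve_right (ne_of_apply_ne _ hne)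

lemma disjoint_branchSet (hab : a ≠ b) : Disjoint (M.branchSet a) (M.branchSet b) := by
  refine Set.disjoint_left.2 fun x hxa hxb => ?_
  by_cases hx : x ∈ Set.range M.branch
  · obtain ⟨c, rfl⟩ := hx
    exact hab ((M.eq_of_branch_mem_branchSet hxa).symm.trans (M.eq_of_branch_mem_branchSet hxb))
  · obtain ⟨c, hac, hltc, hxc, -⟩ := hxa.resolve_left fun h => hx ⟨a, h.symm⟩
    obtain ⟨d, hbd, hltd, hxd, -⟩ := hxb.resolve_left fun h => hx ⟨b, h.symm⟩
    have hedge : s(a, c) = s(b, d) := by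
      by_contra hne
      exact hx (M.mem_range_of_mem_support hac hbd hne x hxc hxd)
    rcases Sym2.eq_iff.1 hedge with ⟨h, -⟩ | ⟨rfl, rfl⟩
    · exact hab h
    · exact hltc.asymm hltd

lemma connected_induce_branchSet (a : U) : (G.induce (M.branchSet a)).Connected := by
  classical
  refine induce_connected_of_patches (M.branch a) (Set.mem_insert _ _) fun {x} hx => ?_
  rcases hx with rfl | ⟨b, h, hlt, hx, hne⟩
  · exact ⟨{M.branch a}, Set.singleton_subset_iff.2 (Set.mem_insert _ _), rfl, rfl, .refl _⟩
  · have hb : M.branch b ∉ ((M.path h).takeUntil x hx).support :=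
      Walk.endpoint_notMem_support_takeUntil (M.isPath h) hx hne.symm
    refine ⟨{y | y ∈ ((M.path h).takeUntil x hx).support}, fun y hy => Or.inr ?_,
      Walk.start_mem_support _, Walk.end_mem_support _,
      (Walk.connected_induce_support _).preconnected _ _⟩
    exact ⟨b, h, hlt, Walk.support_takeUntil_subset_support _ hx hy, fun hyb => hb (hyb ▸ hy)⟩

lemma exists_adj_branchSet_of_lt (h : H.Adj a b) (hlt : a < b) :
    ∃ x ∈ M.branchSet a, ∃ y ∈ M.branchSet b, G.Adj x y := by
  have hadj := (M.path h).adj_penultimate (Walk.not_nil_of_ne (M.branch.injective.ne h.ne))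
  exact ⟨_, Or.inr ⟨b, h, hlt, Walk.getVert_mem_support _ _, hadj.ne⟩, _, Set.mem_insert _ _, hadj⟩

end BranchSet

lemma isMinor (M : SubdivisionModel G H) : IsMinor H G := by
  obtain ⟨_, -⟩ := exists_wellFoundedLT U
  refine ⟨M.branchSet, fun a => ⟨_, Set.mem_insert _ _⟩, M.connected_induce_branchSet,
    fun _ _ => M.disjoint_branchSet, fun a b hab => ?_⟩
  rcases hab.ne.lt_or_gt with hlt | hlt
  · exact M.exists_adj_branchSet_of_lt hab hlt
  · obtain ⟨x, hx, y, hy, hxy⟩ := M.exists_adj_branchSet_of_lt hab.symm hlt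
    exact ⟨y, hy, x, hx, hxy.symm⟩

lemma almostPlanar (hH : AlmostPlanar H)
    (hlen : ∀ ⦃u v : U⦄ (h : H.Adj u v), s(u, v) ∉ Dset H → (M.path h).length = 1) :
    AlmostPlanar G := by
  have hdeg : ∀ x ∉ Set.range M.branch, (G.neighborSet x).encard ≤ 2 := fun x hx =>
    M.encard_neighborSet_le_two hx
  refine ⟨fun hG => hH.1 (hG.of_isMinor M.isMinor), fun x y hxy => ?_⟩
  obtain ⟨u, v, h, he⟩ := M.exists_mem_edges s(x, y) hxy
  by_cases hD : s(u, v) ∈ Dset H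
  · refine Or.inl (hD.2.of_torso_le (M.torso_deleteEdges_le h he) M.branch.injective
      fun x hx => ?_)
    exact (Set.encard_le_encard (neighborSet_mono (deleteEdges_le _) x)).trans (hdeg x hx)
  · have hcon {a b : U} (hab : H.Adj a b) (habD : s(a, b) ∉ Dset H) :
        Planar (contractEdge G (M.branch a) (M.branch b)) :=
      ((hH.2 hab).resolve_left fun hdel => habD ⟨hab, hdel⟩).contractEdge_of_torso_le M.torso_le
        M.branch.injective hdeg hab.ne
    rcases Sym2.eq_iff.1 (eq_of_mem_edges_of_length_eq_one (hlen h hD) he) with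
      ⟨rfl, rfl⟩ | ⟨rfl, rfl⟩
    · exact Or.inr (hcon h hD)
    · exact Or.inr (hcon h.symm (Sym2.eq_swap ▸ hD))

end SubdivisionModel
end Subdivision

theorem stmt12_general {U V : Type*} {H : SimpleGraph U} {G : SimpleGraph V}
    (hH : AlmostPlanar H) (hsub : IsSubdivisionWithin G H (Dset H)) :
    AlmostPlanar G ∧
    ∀ (V₂ : Type*) (G₂ : SimpleGraph V₂), AddIsolated G₂ G → AlmostPlanar G₂ := by
  obtain ⟨f, p, hpath, hsymm, hlen, hbranch, hdisj, hvert, hedge⟩ := hsub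
  have hG : AlmostPlanar G :=
    SubdivisionModel.almostPlanar ⟨f, p, hpath, hsymm, hbranch, hdisj, hvert, hedge⟩ hH hlen
  exact ⟨hG, fun _ _ h => hG.addIsolated h⟩

/-- If `H` is 3-connected and almost-planar and `G` is obtained from `H` by repeatedly
subdividing edges of `D(H)`, then `G` is almost-planar, and so is any graph obtained
from `G` by adding isolated vertices. -/
theorem stmt12 {U V : Type} [Fintype U] [Fintype V] (H : SimpleGraph U) (G : SimpleGraph V)
    (hH3 : KConnected H 3) (hHap : AlmostPlanar H)
    (hsub : IsSubdivisionWithin G H (Dset H)) :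
    AlmostPlanar G ∧
    ∀ (V₂ : Type) (G₂ : SimpleGraph V₂), AddIsolated G₂ G → AlmostPlanar G₂ :=
  stmt12_general hHap hsub
end

section
/- Every connected nonplanar graph with no minor isomorphic to K5+ or K33+ is 2-connected. -/
open SimpleGraph

/-!
Suppose that `G - v` is disconnected and that `G` has a minor `H` such that `H - w` is connected for
every `w`. Some model of `H` in `G` misses a vertex. This is clear if `v` lies in no branch set. If
`v` lies in the branch set of `w₀`, the other branch sets together form a connected subgraph of
`G - v`, hence lie in one component `C`; collapsing all vertices outside `C` to `v` turns the model
into one contained in `C ∪ {v}`, which misses the other components of `G - v`.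

As `G` is connected, some vertex outside the model is adjacent to a branch set, and this extends `H`
to `H` plus a pendant vertex. When `H` is vertex-transitive, as `K₅` and `K₃,₃` are, the attachment
vertex of the pendant edge can be prescribed.
-/

section Connectivity

variable {V W : Type*} {G : SimpleGraph V} {H : SimpleGraph W}

lemma reachable_map_of_adj_or_eq {f : V → W}
    (hf : ∀ x y, G.Adj x y → H.Adj (f x) (f y) ∨ f x = f y) {x y : V} (hxy : G.Reachable x y) :
    H.Reachable (f x) (f y) := by
  obtain ⟨p⟩ := hxy
  induction p with
  | nil => exact Reachable.rfl
  | cons hadj _ ih => exact ((hf _ _ hadj).elim Adj.reachable fun h => h ▸ Reachable.rfl).trans ih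

lemma connected_induce_image_of_adj_or_eq {f : V → W}
    (hf : ∀ x y, G.Adj x y → H.Adj (f x) (f y) ∨ f x = f y) {s : Set V}
    (hs : (G.induce s).Connected) : (H.induce (f '' s)).Connected := by
  obtain ⟨x, hx⟩ := connected_iff_exists_forall_reachable _ |>.1 hs
  refine connected_iff_exists_forall_reachable _ |>.2 ⟨s.imageFactorization f x, ?_⟩
  refine Set.imageFactorization_surjective.forall.2 fun y => reachable_map_of_adj_or_eq ?_ (hx y)
  exact fun a b hab => (hf a b hab).imp id Subtype.ext

lemma exists_adj_mem_notMem (hG : G.Preconnected) {s : Set V} (hs : s.Nonempty)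
    (hs' : s ≠ Set.univ) : ∃ x ∈ s, ∃ y ∉ s, G.Adj x y := by
  obtain ⟨a, ha⟩ := hs
  obtain ⟨b, hb⟩ := (Set.ne_univ_iff_exists_notMem s).1 hs'
  obtain ⟨p⟩ := hG a b
  obtain ⟨d, -, hfst, hsnd⟩ := p.exists_boundary_dart s ha hb
  exact ⟨d.fst, hfst, d.snd, hsnd, d.adj⟩

lemma exists_subset_componentCompl {K s : Set V} (hs : (G.induce s).Connected)
    (hsK : s ⊆ Kᶜ) : ∃ C : G.ComponentCompl K, s ⊆ C := by
  obtain ⟨a⟩ := hs.nonempty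
  refine ⟨G.componentComplMk (hsK a.2), fun x hx => ⟨hsK hx, ConnectedComponent.eq.2 ?_⟩⟩
  exact (hs.preconnected ⟨x, hx⟩ a).map (G.induceHomOfLE hsK).toHom

lemma connected_induce_compl_of_subset_componentCompl {K : Set V} (C : G.ComponentCompl K)
    (hC : Kᶜ ⊆ C) : (G.induce Kᶜ).Connected := by
  obtain ⟨a, ha, rfl⟩ := C.exists_eq_mk
  refine connected_iff_exists_forall_reachable _ |>.2 ⟨⟨a, ha⟩, fun x => ?_⟩
  obtain ⟨_, hx⟩ := hC x.2
  exact (ConnectedComponent.eq.1 hx).symm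

end Connectivity

section ComponentRetraction

variable {V : Type*} {G : SimpleGraph V} {v : V}

open Classical in
/-- The retraction of `G` onto `C ∪ {v}`, for a component `C` of `G - v`, which collapses all
vertices outside `C` to `v`. -/
noncomputable def componentRetraction (C : G.ComponentCompl {v}) (x : V) : V :=
  if x ∈ C then x else v

lemma componentRetraction_mem_insert (C : G.ComponentCompl {v}) (x : V) :
    componentRetraction C x ∈ insert v (C : Set V) := by
  unfold componentRetraction
  split_ifs with hx
  · exact Or.inr hx
  · exact Or.inl rfl

lemma componentRetraction_adj_or_eq (C : G.ComponentCompl {v}) {x y : V} (hxy : G.Adj x y) :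
    G.Adj (componentRetraction C x) (componentRetraction C y) ∨
      componentRetraction C x = componentRetraction C y := by
  have eq_cut {a b : V} (ha : a ∈ C) (hb : b ∉ C) (hab : G.Adj a b) : b = v := by
    by_contra hbv
    exact hb (ComponentCompl.mem_of_adj a b ha hbv hab)
  unfold componentRetraction
  split_ifs with hx hy hy
  · exact Or.inl hxy
  · exact Or.inl (eq_cut hx hy hxy ▸ hxy)
  · exact Or.inl (eq_cut hy hx hxy.symm ▸ hxy)
  · exact Or.inr rfl

lemma componentRetraction_image_subset {C : G.ComponentCompl {v}} {s : Set V}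
    (hs : v ∈ s ∨ s ⊆ C) : componentRetraction C '' s ⊆ s := by
  rintro _ ⟨x, hx, rfl⟩
  unfold componentRetraction
  split_ifs with hxC
  · exact hx
  · exact hs.resolve_right fun h => hxC (h hx)

end ComponentRetraction

section MinorModel

variable {U V W : Type*} {F : SimpleGraph U} {G : SimpleGraph V} {H : SimpleGraph W}
  {B : W → Set V}

/-- `B` is a model of `H` in `G`: the sets `B w` are the branch sets witnessing `IsMinor H G`. -/
structure IsMinorModel (H : SimpleGraph W) (G : SimpleGraph V) (B : W → Set V) : Prop where
  nonempty : ∀ w, (B w).Nonempty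
  connected : ∀ w, (G.induce (B w)).Connected
  disjoint : Pairwise fun w₁ w₂ => Disjoint (B w₁) (B w₂)
  exists_adj : ∀ ⦃w₁ w₂ : W⦄, H.Adj w₁ w₂ → ∃ v₁ ∈ B w₁, ∃ v₂ ∈ B w₂, G.Adj v₁ v₂

lemma isMinor_iff_exists_isMinorModel : IsMinor H G ↔ ∃ B, IsMinorModel H G B :=
  ⟨fun ⟨B, hne, hconn, hdisj, hadj⟩ => ⟨B, hne, hconn, hdisj, hadj⟩,
    fun ⟨B, hB⟩ => ⟨B, hB.nonempty, hB.connected, hB.disjoint, hB.exists_adj⟩⟩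

lemma enatCard_le_of_isMinor (h : IsMinor H G) : ENat.card W ≤ ENat.card V := by
  obtain ⟨B, hB⟩ := isMinor_iff_exists_isMinorModel.1 h
  choose g hg using hB.nonempty
  refine ENat.card_le_card_of_injective (f := g) fun a b hab => ?_
  by_contra hne
  exact Set.disjoint_left.1 (hB.disjoint hne) (hg a) (hab ▸ hg b)

namespace IsMinorModel

lemma comp_copy (hB : IsMinorModel H G B) (f : Copy F H) : IsMinorModel F G (B ∘ f) where
  nonempty u := hB.nonempty (f u)
  connected u := hB.connected (f u)
  disjoint _ _ hne := hB.disjoint (f.injective.ne hne)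
  exists_adj _ _ h := hB.exists_adj (f.toHom.map_adj h)

lemma image {f : V → U} (hB : IsMinorModel H G B)
    (hf : ∀ x y, G.Adj x y → F.Adj (f x) (f y) ∨ f x = f y)
    (hdisj : Pairwise fun w₁ w₂ => Disjoint (f '' B w₁) (f '' B w₂)) :
    IsMinorModel H F fun w => f '' B w where
  nonempty w := (hB.nonempty w).image f
  connected w := connected_induce_image_of_adj_or_eq hf (hB.connected w)
  disjoint := hdisj
  exists_adj w₁ w₂ h := by
    obtain ⟨x, hx, y, hy, hxy⟩ := hB.exists_adj h
    have hfx := Set.mem_image_of_mem f hx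
    have hfy := Set.mem_image_of_mem f hy
    exact ⟨f x, hfx, f y, hfy, (hf x y hxy).resolve_right ((hdisj h.ne).ne_of_mem hfx hfy)⟩

lemma connected_biUnion (hB : IsMinorModel H G B) {s : Set W} (hs : (H.induce s).Connected) :
    (G.induce (⋃ w ∈ s, B w)).Connected := by
  have subset {w : W} (hw : w ∈ s) : B w ⊆ ⋃ w ∈ s, B w := Set.subset_biUnion_of_mem hw
  have reach_branch {w : W} (hw : w ∈ s) {x y : V} (hx : x ∈ B w) (hy : y ∈ B w) :
      (G.induce (⋃ w ∈ s, B w)).Reachable ⟨x, subset hw hx⟩ ⟨y, subset hw hy⟩ :=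
    (hB.connected w ⟨x, hx⟩ ⟨y, hy⟩).map (G.induceHomOfLE (subset hw)).toHom
  have reach {w w' : s} (p : (H.induce s).Walk w w') {x y : V} (hx : x ∈ B w) (hy : y ∈ B w') :
      (G.induce (⋃ w ∈ s, B w)).Reachable ⟨x, subset w.2 hx⟩ ⟨y, subset w'.2 hy⟩ := by
    induction p generalizing x with
    | nil => exact reach_branch (Subtype.prop _) hx hy
    | @cons u u' _ h _ ih =>
      obtain ⟨a, ha, b, hb, hab⟩ := hB.exists_adj (induce_adj.1 h)
      have hab' : (G.induce (⋃ w ∈ s, B w)).Adj ⟨a, subset u.2 ha⟩ ⟨b, subset u'.2 hb⟩ := hab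
      exact (reach_branch u.2 hx ha).trans (hab'.reachable.trans (ih hb hy))
  obtain ⟨w⟩ := hs.nonempty
  obtain ⟨x, hx⟩ := hB.nonempty w
  refine connected_iff_exists_forall_reachable _ |>.2 ⟨⟨x, subset w.2 hx⟩, fun ⟨y, hy⟩ => ?_⟩
  obtain ⟨w', hw', hyw'⟩ := Set.mem_iUnion₂.1 hy
  obtain ⟨p⟩ := hs.preconnected w ⟨w', hw'⟩
  exact reach p hx hyw'

lemma exists_forall_ne_subset_componentCompl (hB : IsMinorModel H G B) {v : V} {w₀ : W}
    (hH : (H.induce {w₀}ᶜ).Connected) (hv : v ∈ B w₀) :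
    ∃ C : G.ComponentCompl {v}, ∀ w ≠ w₀, B w ⊆ C := by
  have avoids_v : ⋃ w ∈ ({w₀}ᶜ : Set W), B w ⊆ {v}ᶜ := Set.iUnion₂_subset fun w hw =>
    Set.subset_compl_singleton_iff.2 fun hvw => Set.disjoint_left.1 (hB.disjoint hw) hvw hv
  obtain ⟨C, hC⟩ := exists_subset_componentCompl (hB.connected_biUnion hH) avoids_v
  exact ⟨C, fun w hw => (Set.subset_biUnion_of_mem hw).trans hC⟩

lemma exists_iUnion_subset_insert_componentCompl (hB : IsMinorModel H G B) {v : V} {w₀ : W}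
    (hH : (H.induce {w₀}ᶜ).Connected) (hv : v ∈ B w₀) :
    ∃ C : G.ComponentCompl {v}, ∃ B', IsMinorModel H G B' ∧ ⋃ w, B' w ⊆ insert v (C : Set V) := by
  obtain ⟨C, hC⟩ := hB.exists_forall_ne_subset_componentCompl hH hv
  have image_subset (w : W) : componentRetraction C '' B w ⊆ B w := by
    refine componentRetraction_image_subset ?_
    obtain rfl | hw := eq_or_ne w w₀
    · exact Or.inl hv
    · exact Or.inr (hC w hw)
  refine ⟨C, _, hB.image (fun _ _ => componentRetraction_adj_or_eq C) fun w₁ w₂ hne =>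
    (hB.disjoint hne).mono (image_subset w₁) (image_subset w₂), ?_⟩
  refine Set.iUnion_subset fun w => Set.image_subset_iff.2 fun x _ => ?_
  exact componentRetraction_mem_insert C x

lemma exists_iUnion_ne_univ (hB : IsMinorModel H G B) (hH : ∀ w, (H.induce {w}ᶜ).Connected)
    {v : V} (hv : ¬ (G.induce {v}ᶜ).Connected) :
    ∃ B', IsMinorModel H G B' ∧ ⋃ w, B' w ≠ Set.univ := by
  by_cases hvB : v ∈ ⋃ w, B w
  · obtain ⟨w₀, hvw₀⟩ := Set.mem_iUnion.1 hvB
    obtain ⟨C, B', hB', hsub⟩ := hB.exists_iUnion_subset_insert_componentCompl (hH w₀) hvw₀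
    refine ⟨B', hB', fun hspan => hv ?_⟩
    refine connected_induce_compl_of_subset_componentCompl C fun x hx => ?_
    exact (hsub (hspan ▸ Set.mem_univ x)).resolve_left hx
  · exact ⟨B, hB, fun hspan => hvB (hspan ▸ Set.mem_univ v)⟩

end IsMinorModel

end MinorModel

section Pendant

variable {V W : Type*} {G : SimpleGraph V} {H : SimpleGraph W} {B : W → Set V}

/-- `H` with a pendant edge attached at `z`, whose new end is `none`: one of the graphs `H⁺`. -/
def addPendant (H : SimpleGraph W) (z : W) : SimpleGraph (Option W) :=
  SimpleGraph.fromRel fun a b =>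
    match a, b with
    | some i, some j => H.Adj i j
    | none, some j => j = z
    | _, _ => False

lemma isMinorModel_addPendant (hB : IsMinorModel H G B) {z : W} {x y : V} (hx : x ∈ B z)
    (hy : y ∉ ⋃ w, B w) (hxy : G.Adj x y) :
    IsMinorModel (addPendant H z) G fun o => o.elim {y} B where
  nonempty := Option.forall.2 ⟨Set.singleton_nonempty y, hB.nonempty⟩
  connected := Option.forall.2 ⟨show (G.induce {y}).Connected by simp, hB.connected⟩
  disjoint := by
    have hyB (w : W) : y ∉ B w := fun h => hy (Set.mem_iUnion_of_mem w h)
    rintro (_ | a) (_ | b) hne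
    · exact absurd rfl hne
    · exact Set.disjoint_singleton_left.2 (hyB b)
    · exact Set.disjoint_singleton_right.2 (hyB a)
    · exact hB.disjoint fun h => hne (congrArg some h)
  exists_adj := by
    rintro (_ | a) (_ | b) hab
    · exact absurd rfl hab.ne
    · obtain rfl : b = z := by simpa [addPendant] using hab
      exact ⟨y, rfl, x, hx, hxy.symm⟩
    · obtain rfl : a = z := by simpa [addPendant] using hab
      exact ⟨x, hx, y, rfl, hxy⟩
    · have hH : a ≠ b ∧ H.Adj a b := by simpa [addPendant, H.adj_comm] using hab
      exact hB.exists_adj hH.2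

lemma isMinor_addPendant_of_iUnion_ne_univ [MulAction.IsPretransitive (H ≃g H) W]
    (hG : G.Preconnected) (hB : IsMinorModel H G B) (hspan : ⋃ w, B w ≠ Set.univ) (z : W) :
    IsMinor (addPendant H z) G := by
  have hne : (⋃ w, B w).Nonempty := (hB.nonempty z).mono (Set.subset_iUnion B z)
  obtain ⟨x, hx, y, hy, hxy⟩ := exists_adj_mem_notMem hG hne hspan
  obtain ⟨w, hxw⟩ := Set.mem_iUnion.1 hx
  obtain ⟨σ, rfl⟩ := MulAction.exists_smul_eq (H ≃g H) z w
  have hy' : y ∉ ⋃ w, (B ∘ σ) w := fun h =>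
    hy (Set.iUnion_subset (fun w => Set.subset_iUnion B (σ w)) h)
  exact isMinor_iff_exists_isMinorModel.2
    ⟨_, isMinorModel_addPendant (hB.comp_copy σ.toCopy) hxw hy' hxy⟩

theorem connected_induce_compl_singleton_of_isMinor [MulAction.IsPretransitive (H ≃g H) W]
    (hH : ∀ w, (H.induce {w}ᶜ).Connected) (hG : G.Preconnected) (hHG : IsMinor H G) {z : W}
    (hfree : ¬ IsMinor (addPendant H z) G) (v : V) : (G.induce {v}ᶜ).Connected := by
  by_contra hv
  obtain ⟨B, hB⟩ := isMinor_iff_exists_isMinorModel.1 hHG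
  obtain ⟨B', hB', hspan⟩ := hB.exists_iUnion_ne_univ hH hv
  exact hfree (isMinor_addPendant_of_iUnion_ne_univ hG hB' hspan z)

end Pendant

section Kuratowski

variable {V W : Type*}

instance isPretransitive_top :
    MulAction.IsPretransitive ((⊤ : SimpleGraph V) ≃g (⊤ : SimpleGraph V)) V where
  exists_smul_eq a b := by
    classical
    exact ⟨Iso.completeGraph (Equiv.swap a b), Equiv.swap_apply_left a b⟩

instance isPretransitive_completeBipartiteGraph : MulAction.IsPretransitive
    (completeBipartiteGraph V V ≃g completeBipartiteGraph V V) (V ⊕ V) where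
  exists_smul_eq := by
    classical
    let swap (a b : V) := completeBipartiteGraphCongr (Equiv.swap a b) (Equiv.swap a b)
    let flip : completeBipartiteGraph V V ≃g completeBipartiteGraph V V :=
      ⟨Equiv.sumComm V V, by rintro (_ | _) (_ | _) <;> simp⟩
    rintro (a | a) (b | b)
    · exact ⟨swap a b, congrArg Sum.inl (Equiv.swap_apply_left a b)⟩
    · exact ⟨(swap a b).trans flip, congrArg Sum.inr (Equiv.swap_apply_left a b)⟩
    · exact ⟨(swap a b).trans flip, congrArg Sum.inl (Equiv.swap_apply_left a b)⟩
    · exact ⟨swap a b, congrArg Sum.inr (Equiv.swap_apply_left a b)⟩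

lemma connected_induce_compl_singleton_top [Nontrivial V] (v : V) :
    ((⊤ : SimpleGraph V).induce {v}ᶜ).Connected := by
  have : Nonempty ({v}ᶜ : Set V) := Set.nonempty_compl_of_nontrivial v |>.to_subtype
  rw [induce_top]
  exact connected_top

lemma connected_induce_completeBipartiteGraph {s : Set (V ⊕ W)} {a : V} {b : W}
    (ha : Sum.inl a ∈ s) (hb : Sum.inr b ∈ s) :
    ((completeBipartiteGraph V W).induce s).Connected := by
  have adj {i : V} {j : W} (hi : Sum.inl i ∈ s) (hj : Sum.inr j ∈ s) :
      ((completeBipartiteGraph V W).induce s).Adj ⟨_, hi⟩ ⟨_, hj⟩ := by simp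
  refine connected_iff_exists_forall_reachable _ |>.2 ⟨⟨_, ha⟩, ?_⟩
  rintro ⟨i | j, h⟩
  · exact (adj ha hb).reachable.trans (adj h hb).symm.reachable
  · exact (adj ha h).reachable

lemma connected_induce_compl_singleton_completeBipartiteGraph [Nontrivial V] [Nontrivial W]
    (x : V ⊕ W) : ((completeBipartiteGraph V W).induce {x}ᶜ).Connected := by
  obtain ⟨a, ha⟩ : ∃ a : V, Sum.inl a ≠ x := by
    obtain i | j := x
    · exact (exists_ne i).imp fun _ => Sum.inl_injective.ne
    · exact ⟨Classical.arbitrary V, Sum.inl_ne_inr⟩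
  obtain ⟨b, hb⟩ : ∃ b : W, Sum.inr b ≠ x := by
    obtain i | j := x
    · exact ⟨Classical.arbitrary W, Sum.inr_ne_inl⟩
    · exact (exists_ne j).imp fun _ => Sum.inr_injective.ne
  exact connected_induce_completeBipartiteGraph ha hb

instance isPretransitive_K5 : MulAction.IsPretransitive (K5 ≃g K5) (Fin 5) :=
  isPretransitive_top

instance isPretransitive_K33 : MulAction.IsPretransitive (K33 ≃g K33) (Fin 3 ⊕ Fin 3) :=
  isPretransitive_completeBipartiteGraph

lemma K5plus_eq_addPendant : K5plus = addPendant K5 0 := by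
  ext (_ | _) (_ | _) <;> simp [K5plus, K5, addPendant]

lemma K33plus_eq_addPendant : K33plus = addPendant K33 (Sum.inl 0) := by
  ext (_ | _ | _) (_ | _ | _) <;> simp [K33plus, K33, addPendant]

end Kuratowski

/-- Stated with `ENat.card`, since `Nat.card` is `0` on infinite types. -/
theorem stmt15_general {V : Type*} (G : SimpleGraph V) (hconn : G.Connected)
    (hnp : ¬ Planar G) (hfree : ¬ IsMinor K5plus G ∧ ¬ IsMinor K33plus G) :
    G.Connected ∧ 3 ≤ ENat.card V ∧ ∀ v : V, (G.induce ({v}ᶜ : Set V)).Connected := by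
  rw [K5plus_eq_addPendant, K33plus_eq_addPendant] at hfree
  refine ⟨hconn, ?_⟩
  obtain hK5 | hK33 : IsMinor K5 G ∨ IsMinor K33 G := by
    simpa only [Planar, not_and_or, not_not] using hnp
  · exact ⟨le_trans (by norm_num) (enatCard_le_of_isMinor hK5),
      connected_induce_compl_singleton_of_isMinor connected_induce_compl_singleton_top
        hconn.preconnected hK5 hfree.1⟩
  · exact ⟨le_trans (by norm_num) (enatCard_le_of_isMinor hK33),
      connected_induce_compl_singleton_of_isMinor
        connected_induce_compl_singleton_completeBipartiteGraph hconn.preconnected hK33 hfree.2⟩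

/-- Every connected nonplanar {K5+, K33+}-free graph is 2-connected
(connected, at least 3 vertices, and no cut vertex). -/
theorem stmt15 {V : Type} [Fintype V] (G : SimpleGraph V) (hconn : G.Connected)
    (hnp : ¬ Planar G) (hfree : ¬ IsMinor K5plus G ∧ ¬ IsMinor K33plus G) :
    G.Connected ∧ 3 ≤ Nat.card V ∧ ∀ v : V, (G.induce ({v}ᶜ : Set V)).Connected := by
  simpa [ENat.card_eq_coe_natCard] using stmt15_general G hconn hnp hfree
end
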